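/- Value iteration converges: in a finite Markov decision process with discount factor γ ∈ [0,1), the Bellman optimality operator T has a unique fixed point V* : S → ℝ (the optimal value function), and for every initial value function V₀ the iterates Vₙ = T^[n] V₀ converge to V*; moreover max_{s} |Vₙ(s) − V*(s)| ≤ γⁿ · max_{s} |V₀(s) − V*(s)| for every n, so Vₙ(s) → V*(s) for every state s. -/

import Mathlib

open Finset Real Filter

/-!
Averaging against weights of total mass at most one and then discounting by `γ` shrinks distances
in the supremum norm by the factor `|γ|`, and taking a supremum over actions does not expand them.
The Bellman operator is therefore a contraction of the complete space `S → ℝ`, and Banach's fixed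
point theorem applies.
-/

theorem dist_sum_mul_le {ι α : Type*} [Fintype ι] [NonUnitalSeminormedRing α] (p v w : ι → α) :
    dist (∑ i, p i * v i) (∑ i, p i * w i) ≤ (∑ i, ‖p i‖) * dist v w := by
  rw [Finset.sum_mul]
  refine dist_sum_sum_le_of_le _ fun i _ => ?_
  calc dist (p i * v i) (p i * w i) = ‖p i * (v i - w i)‖ := by rw [dist_eq_norm, mul_sub]
    _ ≤ ‖p i‖ * ‖v i - w i‖ := norm_mul_le _ _
    _ ≤ ‖p i‖ * dist v w := by
      rw [← dist_eq_norm]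
      gcongr
      exact dist_le_pi_dist v w i

theorem dist_ciSup_le {ι : Type*} [Nonempty ι] {f g : ι → ℝ} {c : ℝ}
    (hf : BddAbove (Set.range f)) (hg : BddAbove (Set.range g)) (h : ∀ i, dist (f i) (g i) ≤ c) :
    dist (⨆ i, f i) (⨆ i, g i) ≤ c := by
  simp only [Real.dist_eq, abs_sub_le_iff, sub_le_iff_le_add] at h ⊢
  constructor
  · exact ciSup_le fun i => (h i).1.trans (by gcongr; exact le_ciSup hg i)
  · exact ciSup_le fun i => (h i).2.trans (by gcongr; exact le_ciSup hf i)

theorem dist_iterate_le_of_isFixedPt {X : Type*} [PseudoMetricSpace X] {K : NNReal} {f : X → X}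
    (hf : LipschitzWith K f) {y : X} (hy : Function.IsFixedPt f y) (x : X) (n : ℕ) :
    dist (f^[n] x) y ≤ K ^ n * dist x y := by
  simpa only [(hy.iterate n).eq, NNReal.coe_pow] using (hf.iterate n).dist_le_mul x y

theorem sup'_univ_dist_eq_dist {ι : Type*} [Fintype ι] [Nonempty ι] {X : ι → Type*}
    [∀ i, PseudoMetricSpace (X i)] (f g : ∀ i, X i) :
    univ.sup' univ_nonempty (fun i => dist (f i) (g i)) = dist f g :=
  eq_of_forall_ge_iff fun c => by
    simp only [sup'_le_iff, mem_univ, true_implies, dist_pi_le_iff']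

section BellmanOperator

variable {S A : Type*} [Fintype S]

/-- The action value (Q-value) of taking action `a` in state `s` and then collecting the value `V`
of the next state, for reward `R`, transition weights `P` and discount factor `γ`. The weights
`P s a` need not be a probability distribution. -/
def actionValue (P : S → A → S → ℝ) (R : S → A → ℝ) (γ : ℝ) (V : S → ℝ) (s : S) (a : A) : ℝ :=
  R s a + γ * ∑ s', P s a s' * V s'

/-- The Bellman optimality operator, which sends `V` to the optimal one-step action value in each
state. The set of actions may be infinite, hence a supremum instead of a maximum; it has the junk
value `0` in states whose action values are unbounded above. -/
noncomputable def bellmanOperator (P : S → A → S → ℝ) (R : S → A → ℝ) (γ : ℝ) (V : S → ℝ) :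
    S → ℝ :=
  fun s => ⨆ a, actionValue P R γ V s a

variable {P : S → A → S → ℝ} {R : S → A → ℝ} {γ : ℝ}

theorem eq_bellmanOperator_of_forall_eq_sup' [Fintype A] [Nonempty A] {T : (S → ℝ) → (S → ℝ)}
    (hT : ∀ V s, T V s = univ.sup' univ_nonempty
      (fun a => R s a + γ * ∑ s', P s a s' * V s')) :
    T = bellmanOperator P R γ :=
  funext₂ fun V s => (hT V s).trans (sup'_univ_eq_ciSup _)

theorem dist_actionValue_le {s : S} {a : A} (hP : ∑ s', |P s a s'| ≤ 1) (V W : S → ℝ) :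
    dist (actionValue P R γ V s a) (actionValue P R γ W s a) ≤ |γ| * dist V W := by
  have mean_le : dist (∑ s', P s a s' * V s') (∑ s', P s a s' * W s') ≤ dist V W :=
    (dist_sum_mul_le (P s a) V W).trans (mul_le_of_le_one_left dist_nonneg hP)
  calc dist (actionValue P R γ V s a) (actionValue P R γ W s a)
      = |γ| * dist (∑ s', P s a s' * V s') (∑ s', P s a s' * W s') := by
        simp only [actionValue, dist_add_left, Real.dist_eq, ← mul_sub, abs_mul]
    _ ≤ |γ| * dist V W := by gcongr

theorem bddAbove_range_actionValue {s : S} (hP : ∀ a, ∑ s', |P s a s'| ≤ 1)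
    (hR : BddAbove (Set.range (R s))) (V : S → ℝ) :
    BddAbove (Set.range (actionValue P R γ V s)) := by
  obtain ⟨b, hb⟩ := hR
  refine ⟨b + |γ| * dist V 0, Set.forall_mem_range.2 fun a => ?_⟩
  have value_zero : actionValue P R γ 0 s a = R s a := by simp [actionValue]
  calc actionValue P R γ V s a
      ≤ R s a + dist (actionValue P R γ V s a) (R s a) :=
        sub_le_iff_le_add'.1 (Real.sub_le_dist _ _)
    _ ≤ b + |γ| * dist V 0 :=
        add_le_add (hb ⟨a, rfl⟩) (value_zero ▸ dist_actionValue_le (hP a) V 0)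

theorem lipschitzWith_bellmanOperator [Nonempty A] (hP : ∀ s a, ∑ s', |P s a s'| ≤ 1)
    (hR : ∀ s, BddAbove (Set.range (R s))) : LipschitzWith ‖γ‖₊ (bellmanOperator P R γ) :=
  LipschitzWith.of_dist_le_mul fun V W => (dist_pi_le_iff (by positivity)).2 fun s =>
    dist_ciSup_le (bddAbove_range_actionValue (hP s) (hR s) V)
      (bddAbove_range_actionValue (hP s) (hR s) W) fun a => dist_actionValue_le (hP s a) V W

theorem value_iteration_converges_general [Nonempty A] (hP : ∀ s a, ∑ s', |P s a s'| ≤ 1)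
    (hR : ∀ s, BddAbove (Set.range (R s))) (hγ : |γ| < 1) :
    ∃ Vstar : S → ℝ, bellmanOperator P R γ Vstar = Vstar ∧
      (∀ W : S → ℝ, bellmanOperator P R γ W = W → W = Vstar) ∧
      ∀ V₀ : S → ℝ,
        (∀ n : ℕ, dist ((bellmanOperator P R γ)^[n] V₀) Vstar ≤ |γ| ^ n * dist V₀ Vstar) ∧
        Tendsto (fun n : ℕ => (bellmanOperator P R γ)^[n] V₀) atTop (nhds Vstar) := by
  have contracting : ContractingWith ‖γ‖₊ (bellmanOperator P R γ) :=
    ⟨hγ, lipschitzWith_bellmanOperator hP hR⟩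
  exact ⟨_, contracting.fixedPoint_isFixedPt, fun _ hW => contracting.fixedPoint_unique hW,
    fun V₀ => ⟨dist_iterate_le_of_isFixedPt contracting.2 contracting.fixedPoint_isFixedPt V₀,
      contracting.tendsto_iterate_fixedPoint V₀⟩⟩

end BellmanOperator

/-- Value iteration converges: the Bellman optimality operator of a finite MDP with
discount factor `γ ∈ [0,1)` has a unique fixed point `V*`, the iterates from any
initial value function converge to it, and the supremum-norm error contracts like `γ^n`. -/
theorem value_iteration_converges
    {S A : Type*} [Fintype S] [Nonempty S] [Fintype A] [Nonempty A]
    (P : S → A → S → ℝ) (hP0 : ∀ s a s', 0 ≤ P s a s') (hP1 : ∀ s a, ∑ s', P s a s' = 1)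
    (R : S → A → ℝ) (γ : ℝ) (hγ0 : 0 ≤ γ) (hγ1 : γ < 1)
    (T : (S → ℝ) → (S → ℝ))
    (hT : ∀ V s, T V s = Finset.univ.sup' Finset.univ_nonempty
        (fun a => R s a + γ * ∑ s', P s a s' * V s')) :
    ∃ Vstar : S → ℝ, T Vstar = Vstar ∧ (∀ W : S → ℝ, T W = W → W = Vstar) ∧
      ∀ V₀ : S → ℝ,
        (∀ n : ℕ, Finset.univ.sup' Finset.univ_nonempty
              (fun s => |T^[n] V₀ s - Vstar s|)
            ≤ γ ^ n * Finset.univ.sup' Finset.univ_nonempty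
              (fun s => |V₀ s - Vstar s|)) ∧
        (∀ s : S, Tendsto (fun n : ℕ => T^[n] V₀ s) atTop (nhds (Vstar s))) := by
  have mass_le_one (s : S) (a : A) : ∑ s', |P s a s'| ≤ 1 := by
    simp only [abs_of_nonneg (hP0 s a _), hP1, le_refl]
  simpa only [eq_bellmanOperator_of_forall_eq_sup' hT, ← Real.dist_eq, sup'_univ_dist_eq_dist,
    abs_of_nonneg hγ0, tendsto_pi_nhds] using
    value_iteration_converges_general (γ := γ) mass_le_one
      (fun s => (Set.finite_range (R s)).bddAbove) (by rwa [abs_of_nonneg hγ0])
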